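/- Let u be a monotone traveling wave solution of the balanced Allen-Cahn equation in the plane. Then ∂u/∂y is square integrable over the whole plane: ∫_{ℝ²} (∂u/∂y(x,y))² dx dy < ∞. -/

import Mathlib

open Real Filter MeasureTheory Metric

noncomputable def pdx (u : ℝ → ℝ → ℝ) (x y : ℝ) : ℝ := deriv (fun t => u t y) x

noncomputable def pdy (u : ℝ → ℝ → ℝ) (x y : ℝ) : ℝ := deriv (fun t => u x t) y

noncomputable def pdxx (u : ℝ → ℝ → ℝ) (x y : ℝ) : ℝ := deriv (fun t => pdx u t y) x

noncomputable def pdyy (u : ℝ → ℝ → ℝ) (x y : ℝ) : ℝ := deriv (fun t => pdy u x t) y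

/-- `F` is a balanced double-well potential. -/
def BalancedDoubleWell (F : ℝ → ℝ) : Prop :=
  ContDiff ℝ 3 F ∧ deriv F (-1) = 0 ∧ deriv F 1 = 0 ∧
  0 < deriv (deriv F) (-1) ∧ 0 < deriv (deriv F) 1 ∧
  (∀ s ∈ Set.Ioo (-1 : ℝ) 0, 0 < deriv F s) ∧
  (∀ s ∈ Set.Ioo (0 : ℝ) 1, deriv F s < 0) ∧
  F (-1) = 0 ∧ F 1 = 0

/-- `u` is a `C³` solution of `Δu + c uᵧ = F'(u)` on `ℝ²` with `|u| ≤ 1`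
which is monotone in `y`. -/
def IsSolution (F : ℝ → ℝ) (c : ℝ) (u : ℝ → ℝ → ℝ) : Prop :=
  ContDiff ℝ 3 (fun p : ℝ × ℝ => u p.1 p.2) ∧
  (∀ x y : ℝ, pdxx u x y + pdyy u x y + c * pdy u x y = deriv F (u x y)) ∧
  (∀ x y : ℝ, |u x y| ≤ 1) ∧
  (∀ x y : ℝ, 0 < pdy u x y)

/-- A monotone traveling wave solution connecting `-1` to `1`. -/
def IsTravelingWave (F : ℝ → ℝ) (c : ℝ) (u : ℝ → ℝ → ℝ) : Prop :=
  IsSolution F c u ∧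
  (∀ x : ℝ, Tendsto (fun y => u x y) atTop (nhds 1)) ∧
  (∀ x : ℝ, Tendsto (fun y => u x y) atBot (nhds (-1)))

/-!
Multiplied by `uᵧ`, the equation takes the divergence form
`∂ₓ(uₓ uᵧ) + ∂ᵧ((uᵧ² - uₓ²) / 2 - F(u)) = -c uᵧ²`, which turns the integral of `c uᵧ²` over the
rectangle `[-R, R] × [-S, S]` into a flux through its boundary. As `u` is monotone in `y`, the flux
through a vertical side is at most `sup |uₓ|` times the oscillation of `u`, independently of `R` and
`S`. For fixed `R` and `S → ∞` the integrals over the horizontal sides tend to `-2R F(1)` and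
`-2R F(-1)`, and these cancel because the wells are balanced.

The last limit needs `∇u → 0` as `y → ±∞`. By Dini's theorem the convergence of `u` to its limits is
locally uniform in `x`, and an interior gradient estimate bounds `∇u` by
`C (ε / r + r sup |F'(u)|)` where `ε` is the distance of `u` from the limit on a ball of radius
`r ≤ 1`. With `ε = r²` this is of order `r`.
-/

section PartialDerivatives

variable {u : ℝ → ℝ → ℝ}

theorem hasDerivAt_pdx (hu : Differentiable ℝ fun p : ℝ × ℝ => u p.1 p.2) (x y : ℝ) :
    HasDerivAt (fun t => u t y) (pdx u x y) x :=
  have : Differentiable ℝ fun t => u t y := hu.comp (g := fun p : ℝ × ℝ => u p.1 p.2)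
    (by fun_prop : Differentiable ℝ fun t : ℝ => (t, y))
  (this x).hasDerivAt

theorem hasDerivAt_pdy (hu : Differentiable ℝ fun p : ℝ × ℝ => u p.1 p.2) (x y : ℝ) :
    HasDerivAt (fun t => u x t) (pdy u x y) y :=
  have : Differentiable ℝ fun t => u x t := hu.comp (g := fun p : ℝ × ℝ => u p.1 p.2)
    (by fun_prop : Differentiable ℝ fun t : ℝ => (x, t))
  (this y).hasDerivAt

theorem fderiv_apply_one_zero (hu : Differentiable ℝ fun p : ℝ × ℝ => u p.1 p.2) (p : ℝ × ℝ) :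
    fderiv ℝ (fun q : ℝ × ℝ => u q.1 q.2) p (1, 0) = pdx u p.1 p.2 :=
  ((hu p).hasFDerivAt.comp_hasDerivAt p.1
    ((hasDerivAt_id p.1).prodMk (hasDerivAt_const p.1 p.2))).deriv.symm

theorem fderiv_apply_zero_one (hu : Differentiable ℝ fun p : ℝ × ℝ => u p.1 p.2) (p : ℝ × ℝ) :
    fderiv ℝ (fun q : ℝ × ℝ => u q.1 q.2) p (0, 1) = pdy u p.1 p.2 :=
  ((hu p).hasFDerivAt.comp_hasDerivAt p.2
    ((hasDerivAt_const p.2 p.1).prodMk (hasDerivAt_id p.2))).deriv.symm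

theorem contDiff_pdx {m n : WithTop ℕ∞} (hu : ContDiff ℝ n fun p : ℝ × ℝ => u p.1 p.2)
    (hmn : m + 1 ≤ n) : ContDiff ℝ m fun p : ℝ × ℝ => pdx u p.1 p.2 := by
  have hn : n ≠ 0 := fun h => by simp [h] at hmn
  simp_rw [← fderiv_apply_one_zero (hu.differentiable hn)]
  exact (hu.fderiv_right hmn).clm_apply contDiff_const

theorem contDiff_pdy {m n : WithTop ℕ∞} (hu : ContDiff ℝ n fun p : ℝ × ℝ => u p.1 p.2)
    (hmn : m + 1 ≤ n) : ContDiff ℝ m fun p : ℝ × ℝ => pdy u p.1 p.2 := by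
  have hn : n ≠ 0 := fun h => by simp [h] at hmn
  simp_rw [← fderiv_apply_zero_one (hu.differentiable hn)]
  exact (hu.fderiv_right hmn).clm_apply contDiff_const

theorem hasDerivAt_pdxx (hu : ContDiff ℝ 2 fun p : ℝ × ℝ => u p.1 p.2) (x y : ℝ) :
    HasDerivAt (fun t => pdx u t y) (pdxx u x y) x :=
  hasDerivAt_pdx ((contDiff_pdx hu one_add_one_eq_two.le).differentiable one_ne_zero) x y

theorem hasDerivAt_pdyy (hu : ContDiff ℝ 2 fun p : ℝ × ℝ => u p.1 p.2) (x y : ℝ) :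
    HasDerivAt (fun t => pdy u x t) (pdyy u x y) y :=
  hasDerivAt_pdy ((contDiff_pdy hu one_add_one_eq_two.le).differentiable one_ne_zero) x y

theorem pdx_pdy_comm (hu : ContDiff ℝ 2 fun p : ℝ × ℝ => u p.1 p.2) (x y : ℝ) :
    pdx (pdy u) x y = pdy (pdx u) x y := by
  have hu' := hu.differentiable two_ne_zero
  have hDu := (hu.fderiv_right one_add_one_eq_two.le).differentiable one_ne_zero (x, y)
  have hpdx := (contDiff_pdx hu one_add_one_eq_two.le).differentiable one_ne_zero
  have hpdy := (contDiff_pdy hu one_add_one_eq_two.le).differentiable one_ne_zero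
  rw [← fderiv_apply_one_zero hpdy (x, y), ← fderiv_apply_zero_one hpdx (x, y)]
  simp_rw [← fderiv_apply_one_zero hu', ← fderiv_apply_zero_one hu']
  rw [fderiv_clm_apply hDu (differentiableAt_const _),
    fderiv_clm_apply hDu (differentiableAt_const _)]
  simpa using second_derivative_symmetric (fun p => (hu' p).hasFDerivAt) hDu.hasFDerivAt
    (1, 0) (0, 1)

theorem setIntegral_pdx_add_pdy {f g : ℝ → ℝ → ℝ} (hf : ContDiff ℝ 1 fun p : ℝ × ℝ => f p.1 p.2)
    (hg : ContDiff ℝ 1 fun p : ℝ × ℝ => g p.1 p.2) {a b : ℝ × ℝ} (hab : a ≤ b) :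
    ∫ p in Set.Icc a b, (pdx f p.1 p.2 + pdy g p.1 p.2) =
      ((∫ x in a.1..b.1, g x b.2) - ∫ x in a.1..b.1, g x a.2) +
        (∫ y in a.2..b.2, f b.1 y) - ∫ y in a.2..b.2, f a.1 y := by
  have hf' := hf.differentiable one_ne_zero
  have hg' := hg.differentiable one_ne_zero
  simp_rw [← fderiv_apply_one_zero hf', ← fderiv_apply_zero_one hg']
  refine integral_divergence_prod_Icc_of_hasFDerivAt_of_le (fun p => f p.1 p.2)
    (fun p => g p.1 p.2) _ _ a b hab hf.continuous.continuousOn hg.continuous.continuousOn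
    (fun p _ => (hf' p).hasFDerivAt) (fun p _ => (hg' p).hasFDerivAt)
    (Continuous.integrableOn_Icc ?_)
  exact ((hf.continuous_fderiv one_ne_zero).clm_apply continuous_const).add
    ((hg.continuous_fderiv one_ne_zero).clm_apply continuous_const)

end PartialDerivatives

section Laplacian

variable {v w : ℝ → ℝ → ℝ}

/-- The Laplacian of a function of two real variables. Mathlib's `Laplacian.laplacian` requires an
inner product space, which `ℝ × ℝ` is not; here it is assembled from `pdxx` and `pdyy`. -/
noncomputable def planeLaplacian (v : ℝ → ℝ → ℝ) (x y : ℝ) : ℝ := pdxx v x y + pdyy v x y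

theorem planeLaplacian_eq_of_hasDerivAt {x y vxx vyy : ℝ} {vx vy : ℝ → ℝ}
    (hx : ∀ t, HasDerivAt (fun s => v s y) (vx t) t) (hxx : HasDerivAt vx vxx x)
    (hy : ∀ t, HasDerivAt (fun s => v x s) (vy t) t) (hyy : HasDerivAt vy vyy y) :
    planeLaplacian v x y = vxx + vyy := by
  have hpdx : (fun t => pdx v t y) = vx := funext fun t => (hx t).deriv
  have hpdy : (fun t => pdy v x t) = vy := funext fun t => (hy t).deriv
  rw [planeLaplacian, pdxx, pdyy, hpdx, hpdy, hxx.deriv, hyy.deriv]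

theorem planeLaplacian_sub (hv : ContDiff ℝ 2 fun p : ℝ × ℝ => v p.1 p.2)
    (hw : ContDiff ℝ 2 fun p : ℝ × ℝ => w p.1 p.2) (x y : ℝ) :
    planeLaplacian (fun x y => v x y - w x y) x y =
      planeLaplacian v x y - planeLaplacian w x y := by
  have hv' := hv.differentiable two_ne_zero
  have hw' := hw.differentiable two_ne_zero
  rw [planeLaplacian_eq_of_hasDerivAt (v := fun x y => v x y - w x y)
    (fun t => (hasDerivAt_pdx hv' t y).sub (hasDerivAt_pdx hw' t y))
    ((hasDerivAt_pdxx hv x y).sub (hasDerivAt_pdxx hw x y))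
    (fun t => (hasDerivAt_pdy hv' x t).sub (hasDerivAt_pdy hw' x t))
    ((hasDerivAt_pdyy hv x y).sub (hasDerivAt_pdyy hw x y)), planeLaplacian, planeLaplacian]
  ring

theorem planeLaplacian_comp_const_add (v : ℝ → ℝ → ℝ) (a b x y : ℝ) :
    planeLaplacian (fun x y => v (a + x) (b + y)) x y = planeLaplacian v (a + x) (b + y) := by
  simp only [planeLaplacian, pdxx, pdx, pdyy, pdy, deriv_comp_const_add (fun t => v t (b + y)),
    deriv_comp_const_add (fun t => v (a + x) t), deriv_comp_const_add (deriv fun t => v t (b + y)),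
    deriv_comp_const_add (deriv fun t => v (a + x) t)]

theorem planeLaplacian_comp_neg_left (v : ℝ → ℝ → ℝ) (x y : ℝ) :
    planeLaplacian (fun x y => v (-x) y) x y = planeLaplacian v (-x) y := by
  simp only [planeLaplacian, pdxx, pdx, pdyy, pdy, deriv_comp_neg (fun t => v t y), deriv.fun_neg,
    deriv_comp_neg (deriv fun t => v t y), neg_neg]

theorem planeLaplacian_quadratic (a b d x y : ℝ) :
    planeLaplacian (fun x y => a * y ^ 2 + b * x - d * x ^ 2) x y = 2 * a - 2 * d := by
  rw [planeLaplacian_eq_of_hasDerivAt (vx := fun t => b - d * (2 * t)) (vy := fun t => a * (2 * t))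
    (vxx := -(d * 2)) (vyy := a * 2)]
  · ring
  · exact fun t => by
      simpa using (((hasDerivAt_id t).const_mul b).const_add (a * y ^ 2)).fun_sub
        ((hasDerivAt_pow 2 t).const_mul d)
  · simpa using (((hasDerivAt_id x).const_mul 2).const_mul d).const_sub b
  · exact fun t => by
      simpa using (((hasDerivAt_pow 2 t).const_mul a).add_const (b * x)).sub_const (d * x ^ 2)
  · simpa using ((hasDerivAt_id y).const_mul 2).const_mul a

end Laplacian

section MinimumPrinciple

open Topology

theorem deriv_deriv_nonneg_of_isLocalMin {f : ℝ → ℝ} {x : ℝ} (hmin : IsLocalMin f x)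
    (hf : ContinuousAt f x) : 0 ≤ deriv (deriv f) x := by
  by_contra! hneg
  have hmax : IsLocalMax f x := isLocalMax_of_deriv_deriv_neg hneg hmin.deriv_eq_zero hf
  have hconst : f =ᶠ[𝓝 x] fun _ => f x := by
    filter_upwards [hmin, hmax] with t h₁ h₂ using le_antisymm h₂ h₁
  have hzero : deriv (deriv f) x = 0 := by simpa using hconst.deriv.deriv_eq
  exact hneg.ne hzero

theorem planeLaplacian_nonneg_of_isLocalMin {v : ℝ → ℝ → ℝ} {p : ℝ × ℝ}
    (hmin : IsLocalMin (fun q : ℝ × ℝ => v q.1 q.2) p)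
    (hv : Continuous fun q : ℝ × ℝ => v q.1 q.2) : 0 ≤ planeLaplacian v p.1 p.2 := by
  have hx : Continuous fun t : ℝ => (t, p.2) := by fun_prop
  have hy : Continuous fun t : ℝ => (p.1, t) := by fun_prop
  exact add_nonneg
    (deriv_deriv_nonneg_of_isLocalMin (hmin.comp_continuous (g := fun t => (t, p.2))
      hx.continuousAt) (hv.comp hx).continuousAt)
    (deriv_deriv_nonneg_of_isLocalMin (hmin.comp_continuous (g := fun t => (p.1, t))
      hy.continuousAt) (hv.comp hy).continuousAt)

theorem nonneg_of_planeLaplacian_neg {v : ℝ → ℝ → ℝ} {K : Set (ℝ × ℝ)} (hK : IsCompact K)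
    (hv : Continuous fun p : ℝ × ℝ => v p.1 p.2)
    (hneg : ∀ p ∈ interior K, planeLaplacian v p.1 p.2 < 0)
    (hfrontier : ∀ p ∈ frontier K, 0 ≤ v p.1 p.2) : ∀ p ∈ K, 0 ≤ v p.1 p.2 := by
  intro p hp
  obtain ⟨q, hq, hmin⟩ := hK.exists_isMinOn ⟨p, hp⟩ hv.continuousOn
  have hq_nonneg : 0 ≤ v q.1 q.2 := by
    by_cases hint : q ∈ interior K
    · have hlocal := hmin.isLocalMin (mem_interior_iff_mem_nhds.1 hint)
      exact absurd (hneg q hint) (planeLaplacian_nonneg_of_isLocalMin hlocal hv).not_gt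
    · exact hfrontier q ⟨subset_closure hq, hint⟩
  exact hq_nonneg.trans (hmin hp)

end MinimumPrinciple

section GradientEstimate

open Set Topology

theorem hasDerivAt_le_of_eventually_le_right {f g : ℝ → ℝ} {f' g' a : ℝ} (hf : HasDerivAt f f' a)
    (hg : HasDerivAt g g' a) (ha : f a = g a) (hle : ∀ᶠ x in 𝓝[>] a, f x ≤ g x) : f' ≤ g' := by
  refine le_of_tendsto_of_tendsto
    ((hasDerivAt_iff_tendsto_slope.1 hf).mono_left (nhdsGT_le_nhdsNE a))
    ((hasDerivAt_iff_tendsto_slope.1 hg).mono_left (nhdsGT_le_nhdsNE a)) ?_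
  filter_upwards [hle, self_mem_nhdsWithin] with x hx hax
  rw [slope_def_field, slope_def_field, ha]
  exact div_le_div_of_nonneg_right (sub_le_sub_right hx _) (sub_nonneg.2 (le_of_lt hax))

variable {v : ℝ → ℝ → ℝ} {r M N : ℝ}

/-- The quadratic barrier of Gilbarg and Trudinger, Section 3.4, which dominates
`v x y - v (-x) y` on the half-square `[0, r] × [-r, r]` when `|v| ≤ m * r ^ 2`. The term in `y ^ 2`
takes care of the sides `y = ± r` and does not show on `y = 0`. -/
def gradientBarrier (m N r x y : ℝ) : ℝ :=
  2 * m * y ^ 2 + (4 * m * r + r * N) * x - (2 * m + N) * x ^ 2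

theorem mem_closedBall_zero_of_mem_Icc_prod_Icc {p : ℝ × ℝ} (hp : p ∈ Icc 0 r ×ˢ Icc (-r) r) :
    p ∈ closedBall (0 : ℝ × ℝ) r ∧ (-p.1, p.2) ∈ closedBall (0 : ℝ × ℝ) r := by
  obtain ⟨⟨h₁, h₂⟩, h₃⟩ := hp
  simp [Prod.norm_def, abs_of_nonneg h₁, h₂, abs_le.2 h₃]

theorem sub_comp_neg_le_gradientBarrier_of_mem_frontier {m : ℝ} (hr : 0 < r) (hN : 0 ≤ N)
    (hM : ∀ p ∈ closedBall (0 : ℝ × ℝ) r, |v p.1 p.2| ≤ m * r ^ 2) {p : ℝ × ℝ}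
    (hp : p ∈ frontier (Icc 0 r ×ˢ Icc (-r) r)) :
    v p.1 p.2 - v (-p.1) p.2 ≤ gradientBarrier m N r p.1 p.2 := by
  have hm : 0 ≤ m :=
    nonneg_of_mul_nonneg_left ((abs_nonneg _).trans (hM 0 (mem_closedBall_self hr.le)))
      (by positivity)
  have hpR := (isClosed_Icc.prod isClosed_Icc).frontier_subset hp
  obtain ⟨hball, hball_neg⟩ := mem_closedBall_zero_of_mem_Icc_prod_Icc hpR
  have hv := abs_le.1 (hM p hball)
  have hv_neg := abs_le.1 (hM _ hball_neg)
  obtain ⟨x, y⟩ := p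
  obtain ⟨⟨hx₀, hxr⟩, -⟩ : (0 ≤ x ∧ x ≤ r) ∧ y ∈ Icc (-r) r := hpR
  rw [frontier_prod_eq, frontier_Icc hr.le, frontier_Icc (by linarith)] at hp
  dsimp only [gradientBarrier] at hv hv_neg ⊢
  have hx : 0 ≤ (2 * m + N) * (x * (r - x)) := by
    have := sub_nonneg.2 hxr
    positivity
  have hmx : 0 ≤ m * r * x := by positivity
  have hmy : 0 ≤ m * y ^ 2 := by positivity
  rcases hp with ⟨-, rfl | rfl⟩ | ⟨rfl | rfl, -⟩
  · linarith
  · linarith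
  · simpa [mul_assoc] using hmy
  · linarith

theorem sub_comp_neg_le_gradientBarrier {m : ℝ} (hv : ContDiff ℝ 2 fun p : ℝ × ℝ => v p.1 p.2)
    (hr : 0 < r) (hM : ∀ p ∈ closedBall (0 : ℝ × ℝ) r, |v p.1 p.2| ≤ m * r ^ 2)
    (hN : ∀ p ∈ closedBall (0 : ℝ × ℝ) r, |planeLaplacian v p.1 p.2| < N)
    {p : ℝ × ℝ} (hp : p ∈ Icc 0 r ×ˢ Icc (-r) r) :
    v p.1 p.2 - v (-p.1) p.2 ≤ gradientBarrier m N r p.1 p.2 := by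
  have hN₀ : 0 ≤ N := (abs_nonneg _).trans (hN 0 (mem_closedBall_self hr.le)).le
  have hbarrier : ContDiff ℝ 2 fun p : ℝ × ℝ => gradientBarrier m N r p.1 p.2 := by
    unfold gradientBarrier
    fun_prop
  have hrefl : ContDiff ℝ 2 fun p : ℝ × ℝ => v (-p.1) p.2 :=
    hv.comp (by fun_prop : ContDiff ℝ 2 fun p : ℝ × ℝ => (-p.1, p.2))
  have hodd : ContDiff ℝ 2 fun p : ℝ × ℝ => v p.1 p.2 - v (-p.1) p.2 := hv.sub hrefl
  refine sub_nonneg.1 (nonneg_of_planeLaplacian_neg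
    (v := fun x y => gradientBarrier m N r x y - (v x y - v (-x) y))
    (isCompact_Icc.prod isCompact_Icc) (hbarrier.sub hodd).continuous (fun q hq => ?_)
    (fun q hq => sub_nonneg.2 (sub_comp_neg_le_gradientBarrier_of_mem_frontier hr hN₀ hM hq)) p hp)
  obtain ⟨hball, hball_neg⟩ := mem_closedBall_zero_of_mem_Icc_prod_Icc (interior_subset hq)
  have hΔ := abs_lt.1 (hN q hball)
  have hΔ_neg := abs_lt.1 (hN _ hball_neg)
  have hΔ_barrier :
      planeLaplacian (gradientBarrier m N r) q.1 q.2 = 2 * (2 * m) - 2 * (2 * m + N) :=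
    planeLaplacian_quadratic _ _ _ _ _
  rw [planeLaplacian_sub hbarrier hodd, planeLaplacian_sub hv hrefl, hΔ_barrier,
    planeLaplacian_comp_neg_left]
  linarith

theorem pdx_zero_le (hv : ContDiff ℝ 2 fun p : ℝ × ℝ => v p.1 p.2) (hr : 0 < r)
    (hM : ∀ p ∈ closedBall (0 : ℝ × ℝ) r, |v p.1 p.2| ≤ M)
    (hN : ∀ p ∈ closedBall (0 : ℝ × ℝ) r, |planeLaplacian v p.1 p.2| ≤ N) :
    pdx v 0 0 ≤ 2 * M / r + r * N / 2 := by
  refine le_of_forall_pos_le_add fun ε hε => ?_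
  set N' := N + 2 * ε / r with hN'
  have hNN' : N < N' := lt_add_of_pos_right N (by positivity)
  have hvx : HasDerivAt (fun t => v t 0) (pdx v 0 0) 0 :=
    hasDerivAt_pdx (hv.differentiable two_ne_zero) 0 0
  have hodd : HasDerivAt (fun t => v t 0 - v (-t) 0) (2 * pdx v 0 0) 0 := by
    have hneg : HasDerivAt (fun t => v t 0) (pdx v 0 0) (-0) := by rwa [neg_zero]
    exact (hvx.sub (hneg.comp 0 (hasDerivAt_neg 0))).congr_deriv (by ring)
  obtain ⟨m, rfl⟩ : ∃ m, M = m * r ^ 2 := ⟨M / r ^ 2, by field_simp⟩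
  have hbarrier : HasDerivAt (fun t => gradientBarrier m N' r t 0) (4 * m * r + r * N') 0 := by
    simpa [gradientBarrier] using ((hasDerivAt_id (0 : ℝ)).const_mul (4 * m * r + r * N')).fun_sub
      ((hasDerivAt_pow 2 (0 : ℝ)).const_mul (2 * m + N'))
  have hle : 2 * pdx v 0 0 ≤ 4 * m * r + r * N' := by
    refine hasDerivAt_le_of_eventually_le_right hodd hbarrier (by simp [gradientBarrier]) ?_
    filter_upwards [Ioc_mem_nhdsGT hr] with t ht
    exact sub_comp_neg_le_gradientBarrier (p := (t, 0)) hv hr hM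
      (fun p hp => (hN p hp).trans_lt hNN') ⟨⟨ht.1.le, ht.2⟩, by simp [hr.le]⟩
  have hMr : 2 * (m * r ^ 2) / r = 2 * m * r := by field_simp
  have hrN' : r * N' = r * N + 2 * ε := by rw [hN']; field_simp
  linear_combination hle / 2 + hrN' / 2 - hMr

theorem abs_pdx_le_of_abs_planeLaplacian_le (hv : ContDiff ℝ 2 fun p : ℝ × ℝ => v p.1 p.2)
    (hr : 0 < r) {x y : ℝ} (hM : ∀ p ∈ closedBall (x, y) r, |v p.1 p.2| ≤ M)
    (hN : ∀ p ∈ closedBall (x, y) r, |planeLaplacian v p.1 p.2| ≤ N) :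
    |pdx v x y| ≤ 2 * M / r + r * N / 2 := by
  have hmem {p : ℝ × ℝ} (hp : p ∈ closedBall (0 : ℝ × ℝ) r) :
      (x + p.1, y + p.2) ∈ closedBall (x, y) r := by
    simpa [Prod.dist_eq, Prod.norm_def] using hp
  have hneg_mem {p : ℝ × ℝ} (hp : p ∈ closedBall (0 : ℝ × ℝ) r) :
      (-p.1, p.2) ∈ closedBall (0 : ℝ × ℝ) r := by
    simpa [Prod.norm_def] using hp
  have hsmooth : ContDiff ℝ 2 fun p : ℝ × ℝ => v (x + p.1) (y + p.2) :=
    hv.comp (by fun_prop : ContDiff ℝ 2 fun p : ℝ × ℝ => (x + p.1, y + p.2))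
  have hΔ : ∀ p ∈ closedBall (0 : ℝ × ℝ) r,
      |planeLaplacian (fun x' y' => v (x + x') (y + y')) p.1 p.2| ≤ N := fun p hp => by
    rw [planeLaplacian_comp_const_add]
    exact hN _ (hmem hp)
  have hupper := pdx_zero_le (v := fun x' y' => v (x + x') (y + y')) hsmooth hr
    (fun p hp => hM _ (hmem hp)) hΔ
  have hlower := pdx_zero_le (v := fun x' y' => v (x + -x') (y + y'))
    (hsmooth.comp (by fun_prop : ContDiff ℝ 2 fun p : ℝ × ℝ => (-p.1, p.2))) hr
    (fun p hp => hM _ (hmem (hneg_mem hp)))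
    (fun p hp => by
      rw [planeLaplacian_comp_neg_left fun x' y' => v (x + x') (y + y')]
      exact hΔ _ (hneg_mem hp))
  simp only [pdx, ← sub_eq_add_neg, add_zero, sub_zero, deriv_comp_const_add (fun t => v t y),
    deriv_comp_const_sub (fun t => v t y)] at hupper hlower
  exact abs_le'.2 ⟨hupper, hlower⟩

theorem abs_pdy_le_of_abs_planeLaplacian_le (hv : ContDiff ℝ 2 fun p : ℝ × ℝ => v p.1 p.2)
    (hr : 0 < r) {x y : ℝ} (hM : ∀ p ∈ closedBall (x, y) r, |v p.1 p.2| ≤ M)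
    (hN : ∀ p ∈ closedBall (x, y) r, |planeLaplacian v p.1 p.2| ≤ N) :
    |pdy v x y| ≤ 2 * M / r + r * N / 2 := by
  have hswap {p : ℝ × ℝ} (hp : p ∈ closedBall (y, x) r) : p.swap ∈ closedBall (x, y) r := by
    rw [← closedBall_prod_same] at hp ⊢
    exact hp.symm
  refine abs_pdx_le_of_abs_planeLaplacian_le (v := fun x y => v y x)
    (hv.comp (by fun_prop : ContDiff ℝ 2 fun p : ℝ × ℝ => (p.2, p.1))) hr
    (fun p hp => hM _ (hswap hp)) (fun p hp => ?_)
  have hΔ : planeLaplacian (fun x y => v y x) p.1 p.2 = planeLaplacian v p.2 p.1 := add_comm _ _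
  rw [hΔ]
  exact hN _ (hswap hp)

end GradientEstimate

section AdvectionGradientEstimate

open Set Topology

variable {w : ℝ → ℝ → ℝ} {c r M N x y : ℝ}

/-- The conjugate of `w` by the weight `exp (c (y - b) / 2)`, normalised to be `1` on the line
`y = b`. It is used to remove the advection term of the operator `w ↦ Δw + c w_y`. -/
noncomputable def advectionConjugate (c b : ℝ) (w : ℝ → ℝ → ℝ) (x y : ℝ) : ℝ :=
  exp (c / 2 * (y - b)) * w x y

theorem contDiff_advectionConjugate {n : WithTop ℕ∞} (hw : ContDiff ℝ n fun p : ℝ × ℝ => w p.1 p.2)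
    (c b : ℝ) : ContDiff ℝ n fun p : ℝ × ℝ => advectionConjugate c b w p.1 p.2 :=
  ContDiff.mul (by fun_prop) hw

theorem planeLaplacian_advectionConjugate (hw : ContDiff ℝ 2 fun p : ℝ × ℝ => w p.1 p.2)
    (c b x y : ℝ) :
    planeLaplacian (advectionConjugate c b w) x y =
      advectionConjugate c b
        (fun x y => planeLaplacian w x y + c * pdy w x y + c ^ 2 / 4 * w x y) x y := by
  have hw' := hw.differentiable two_ne_zero
  have hexp (t : ℝ) :
      HasDerivAt (fun s => exp (c / 2 * (s - b))) (exp (c / 2 * (t - b)) * (c / 2)) t := by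
    simpa using (((hasDerivAt_id t).sub_const b).const_mul (c / 2)).exp
  rw [planeLaplacian_eq_of_hasDerivAt (v := advectionConjugate c b w)
    (fun t => (hasDerivAt_pdx hw' t y).const_mul _) ((hasDerivAt_pdxx hw x y).const_mul _)
    (fun t => (hexp t).mul (hasDerivAt_pdy hw' x t))
    ((((hexp y).mul_const (c / 2)).mul (hasDerivAt_pdy hw' x y)).add
      ((hexp y).mul (hasDerivAt_pdyy hw x y))), advectionConjugate, planeLaplacian]
  ring

theorem pdx_advectionConjugate_self (c : ℝ) (w : ℝ → ℝ → ℝ) (x y : ℝ) :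
    pdx (advectionConjugate c y w) x y = pdx w x y := by
  simp [pdx, advectionConjugate]

theorem pdy_advectionConjugate_self (hw : Differentiable ℝ fun p : ℝ × ℝ => w p.1 p.2)
    (c x y : ℝ) : pdy (advectionConjugate c y w) x y = pdy w x y + c / 2 * w x y := by
  have hexp : HasDerivAt (fun t => exp (c / 2 * (t - y))) (c / 2) y := by
    simpa using (((hasDerivAt_id y).sub_const y).const_mul (c / 2)).exp
  refine (hexp.mul (hasDerivAt_pdy hw x y)).deriv.trans ?_
  simp [add_comm]

theorem abs_advectionConjugate_le {b : ℝ} (hy : |y - b| ≤ 1) (hM : |w x y| ≤ M) :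
    |advectionConjugate c b w x y| ≤ exp (|c| / 2) * M := by
  have hexponent : c / 2 * (y - b) ≤ |c| / 2 := by
    refine (le_abs_self _).trans ?_
    rw [abs_mul, abs_div, abs_two]
    exact mul_le_of_le_one_right (by positivity) hy
  rw [advectionConjugate, abs_mul, abs_exp]
  gcongr

theorem abs_gradient_le_of_abs_advection_le (hw : ContDiff ℝ 2 fun p : ℝ × ℝ => w p.1 p.2)
    (hr : 0 < r) (hr1 : r ≤ 1) (hM : ∀ p ∈ closedBall (x, y) r, |w p.1 p.2| ≤ M)
    (hN : ∀ p ∈ closedBall (x, y) r, |planeLaplacian w p.1 p.2 + c * pdy w p.1 p.2| ≤ N) :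
    |pdx w x y| ≤ exp (|c| / 2) * (2 * M / r + r * (N + c ^ 2 / 4 * M) / 2) ∧
    |pdy w x y| ≤
      exp (|c| / 2) * (2 * M / r + r * (N + c ^ 2 / 4 * M) / 2) + |c| / 2 * M := by
  have hdist {p : ℝ × ℝ} (hp : p ∈ closedBall (x, y) r) : |p.2 - y| ≤ 1 :=
    ((le_max_right _ _).trans hp).trans hr1
  have hconj := contDiff_advectionConjugate hw c y
  have hconjM : ∀ p ∈ closedBall (x, y) r,
      |advectionConjugate c y w p.1 p.2| ≤ exp (|c| / 2) * M :=
    fun p hp => abs_advectionConjugate_le (hdist hp) (hM p hp)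
  have hconjN : ∀ p ∈ closedBall (x, y) r, |planeLaplacian (advectionConjugate c y w) p.1 p.2| ≤
      exp (|c| / 2) * (N + c ^ 2 / 4 * M) := fun p hp => by
    rw [planeLaplacian_advectionConjugate hw]
    refine abs_advectionConjugate_le (hdist hp) ((abs_add_le _ _).trans (add_le_add (hN p hp) ?_))
    rw [abs_mul, abs_of_nonneg (by positivity)]
    gcongr
    exact hM p hp
  have hx := abs_pdx_le_of_abs_planeLaplacian_le hconj hr hconjM hconjN
  have hy := abs_pdy_le_of_abs_planeLaplacian_le hconj hr hconjM hconjN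
  rw [pdx_advectionConjugate_self] at hx
  rw [pdy_advectionConjugate_self (hw.differentiable two_ne_zero)] at hy
  have hzeroth : |c / 2 * w x y| ≤ |c| / 2 * M := by
    rw [abs_mul, abs_div, abs_two]
    gcongr
    exact hM _ (mem_closedBall_self hr.le)
  refine ⟨hx.trans_eq (by ring), ?_⟩
  calc |pdy w x y| = |(pdy w x y + c / 2 * w x y) - c / 2 * w x y| := by rw [add_sub_cancel_right]
    _ ≤ |pdy w x y + c / 2 * w x y| + |c / 2 * w x y| := abs_sub _ _
    _ ≤ _ := (add_le_add hy hzeroth).trans_eq (by ring)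

theorem exists_abs_gradient_le (c : ℝ) : ∃ C, ∀ {w : ℝ → ℝ → ℝ} {r M N x y : ℝ},
    (ContDiff ℝ 2 fun p : ℝ × ℝ => w p.1 p.2) → 0 < r → r ≤ 1 →
    (∀ p ∈ closedBall (x, y) r, |w p.1 p.2| ≤ M) →
    (∀ p ∈ closedBall (x, y) r, |planeLaplacian w p.1 p.2 + c * pdy w p.1 p.2| ≤ N) →
    |pdx w x y| ≤ C * (M / r + r * N) ∧ |pdy w x y| ≤ C * (M / r + r * N) := by
  set E := exp (|c| / 2)
  refine ⟨E * (2 + c ^ 2 / 8) + |c| / 2, fun {w r M N x y} hw hr hr1 hM hN => ?_⟩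
  have hM₀ : 0 ≤ M := (abs_nonneg _).trans (hM _ (mem_closedBall_self hr.le))
  have hN₀ : 0 ≤ N := (abs_nonneg _).trans (hN _ (mem_closedBall_self hr.le))
  have hMr : M ≤ M / r := le_div_self hM₀ hr hr1
  have hrM : 0 ≤ M / r - r * M :=
    sub_nonneg.2 ((mul_le_of_le_one_left hM₀ hr1).trans hMr)
  have hmain : E * (2 * M / r + r * (N + c ^ 2 / 4 * M) / 2) ≤
      E * (2 + c ^ 2 / 8) * (M / r + r * N) := by
    rw [← sub_nonneg]
    calc 0 ≤ E * (3 / 2 * (r * N) + c ^ 2 / 8 * (M / r - r * M) + c ^ 2 / 8 * (r * N)) := by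
          positivity
      _ = _ := by ring
  have hzeroth : |c| / 2 * M ≤ |c| / 2 * (M / r + r * N) := by
    gcongr
    exact le_add_of_le_of_nonneg hMr (by positivity)
  obtain ⟨hx, hy⟩ := abs_gradient_le_of_abs_advection_le hw hr hr1 hM hN
  have hzeroth₀ : 0 ≤ |c| / 2 * M := by positivity
  rw [add_mul]
  exact ⟨by linarith, by linarith⟩

theorem tendsto_gradient_zero_of_tendstoUniformlyOn {ι : Type*} {l : Filter ι}
    {w : ι → ℝ → ℝ → ℝ} {L : ℝ} (hw : ∀ i, ContDiff ℝ 2 fun p : ℝ × ℝ => w i p.1 p.2)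
    (hN : ∀ i, ∀ p ∈ closedBall (x, y) 1,
      |planeLaplacian (w i) p.1 p.2 + c * pdy (w i) p.1 p.2| ≤ N)
    (hlim : TendstoUniformlyOn (fun i (p : ℝ × ℝ) => w i p.1 p.2) (fun _ => L) l
      (closedBall (x, y) 1)) :
    Tendsto (fun i => pdx (w i) x y) l (𝓝 0) ∧ Tendsto (fun i => pdy (w i) x y) l (𝓝 0) := by
  obtain ⟨C, hgrad⟩ := exists_abs_gradient_le c
  have hsmall {r : ℝ} (hr : 0 < r) (hr1 : r ≤ 1) : ∀ᶠ i in l,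
      |pdx (w i) x y| ≤ C * (1 + N) * r ∧ |pdy (w i) x y| ≤ C * (1 + N) * r := by
    filter_upwards [Metric.tendstoUniformlyOn_iff.1 hlim (r ^ 2) (by positivity)] with i hi
    have hball := closedBall_subset_closedBall (x := (x, y)) hr1
    have hsub (x' y' : ℝ) : planeLaplacian (fun x y => w i x y - L) x' y' +
        c * pdy (fun x y => w i x y - L) x' y' =
          planeLaplacian (w i) x' y' + c * pdy (w i) x' y' := by
      simp [planeLaplacian, pdxx, pdyy, pdx, pdy]
    have h := hgrad (w := fun x y => w i x y - L) (M := r ^ 2) ((hw i).sub contDiff_const) hr hr1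
      (fun p hp => by simpa [Real.dist_eq, abs_sub_comm] using (hi p (hball hp)).le)
      (fun p hp => by rw [hsub]; exact hN i p (hball hp))
    have hscale : C * (r ^ 2 / r + r * N) = C * (1 + N) * r := by field_simp
    simpa [pdx, pdy, hscale] using h
  have hr₀ : Tendsto (fun r => C * (1 + N) * r) (𝓝[>] 0) (𝓝 0) := by
    simpa using ((continuous_const_mul (C * (1 + N))).tendsto 0).mono_left nhdsWithin_le_nhds
  have heventually {ε : ℝ} (hε : 0 < ε) : ∀ᶠ i in l, |pdx (w i) x y| < ε ∧ |pdy (w i) x y| < ε := by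
    obtain ⟨r, hrε, hr, hr1⟩ :=
      ((hr₀.eventually_lt_const hε).and (Ioc_mem_nhdsGT zero_lt_one)).exists
    filter_upwards [hsmall hr hr1] with i hi using ⟨hi.1.trans_lt hrε, hi.2.trans_lt hrε⟩
  simp only [Metric.tendsto_nhds, Real.dist_0_eq_abs]
  exact ⟨fun ε hε => (heventually hε).mono fun i hi => hi.1,
    fun ε hε => (heventually hε).mono fun i hi => hi.2⟩

end AdvectionGradientEstimate

/-- `u` is a solution of `Δu + c uᵧ = F'(u)` on the plane which, along every line `x = const`,
increases from `a` to `b`. In contrast to `IsTravelingWave`, neither the limits nor the shape of `F`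
are prescribed, and the monotonicity need not be strict. -/
structure IsMonotoneFront (F : ℝ → ℝ) (c a b : ℝ) (u : ℝ → ℝ → ℝ) : Prop where
  contDiff : ContDiff ℝ 2 fun p : ℝ × ℝ => u p.1 p.2
  pde : ∀ x y, planeLaplacian u x y + c * pdy u x y = deriv F (u x y)
  monotone : ∀ x, Monotone (u x)
  tendsto_atBot : ∀ x, Tendsto (u x) atBot (nhds a)
  tendsto_atTop : ∀ x, Tendsto (u x) atTop (nhds b)

/-- The horizontal component of the vector field whose divergence is `-c * (pdy u) ^ 2`. -/
noncomputable def horizontalFlux (u : ℝ → ℝ → ℝ) (x y : ℝ) : ℝ := pdx u x y * pdy u x y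

/-- The vertical component of the vector field whose divergence is `-c * (pdy u) ^ 2`. -/
noncomputable def verticalFlux (F : ℝ → ℝ) (u : ℝ → ℝ → ℝ) (x y : ℝ) : ℝ :=
  (pdy u x y ^ 2 - pdx u x y ^ 2) / 2 - F (u x y)

namespace IsMonotoneFront

open Set Topology

variable {F : ℝ → ℝ} {c a b : ℝ} {u : ℝ → ℝ → ℝ}

theorem mem_Icc (hu : IsMonotoneFront F c a b u) (x y : ℝ) : u x y ∈ Icc a b :=
  ⟨(hu.monotone x).le_of_tendsto (hu.tendsto_atBot x) y,
    (hu.monotone x).ge_of_tendsto (hu.tendsto_atTop x) y⟩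

theorem pdy_nonneg (hu : IsMonotoneFront F c a b u) (x y : ℝ) : 0 ≤ pdy u x y :=
  (hu.monotone x).deriv_nonneg

theorem exists_abs_advection_le (hF : ContDiff ℝ 1 F) (hu : IsMonotoneFront F c a b u) :
    ∃ N, ∀ x y, |planeLaplacian u x y + c * pdy u x y| ≤ N := by
  obtain ⟨N, hN⟩ := (isCompact_Icc (a := a) (b := b)).exists_bound_of_continuousOn
    hF.continuous_deriv_one.continuousOn
  exact ⟨N, fun x y => by rw [hu.pde]; exact hN _ (hu.mem_Icc x y)⟩

theorem exists_abs_pdx_le_and_abs_pdy_le (hF : ContDiff ℝ 1 F) (hu : IsMonotoneFront F c a b u) :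
    ∃ A, ∀ x y, |pdx u x y| ≤ A ∧ |pdy u x y| ≤ A := by
  obtain ⟨N, hN⟩ := hu.exists_abs_advection_le hF
  obtain ⟨C, hC⟩ := exists_abs_gradient_le c
  exact ⟨_, fun x y => hC hu.contDiff one_pos le_rfl
    (fun p _ => abs_le_max_abs_abs (hu.mem_Icc p.1 p.2).1 (hu.mem_Icc p.1 p.2).2)
    (fun p _ => hN p.1 p.2)⟩

theorem contDiff_translate (hu : IsMonotoneFront F c a b u) (y : ℝ) :
    ContDiff ℝ 2 fun p : ℝ × ℝ => u p.1 (y + p.2) :=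
  hu.contDiff.comp (by fun_prop : ContDiff ℝ 2 fun p : ℝ × ℝ => (p.1, y + p.2))

theorem tendstoUniformlyOn_translate_atTop (hu : IsMonotoneFront F c a b u) {K : Set (ℝ × ℝ)}
    (hK : IsCompact K) :
    TendstoUniformlyOn (fun y (p : ℝ × ℝ) => u p.1 (y + p.2)) (fun _ => b) atTop K :=
  Monotone.tendstoUniformlyOn_of_forall_tendsto hK
    (fun y => (hu.contDiff_translate y).continuous.continuousOn)
    (fun p _ _ _ h => hu.monotone p.1 (by gcongr)) continuousOn_const
    (fun p _ => (hu.tendsto_atTop p.1).comp (tendsto_atTop_add_const_right _ p.2 tendsto_id))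

theorem tendstoUniformlyOn_translate_atBot (hu : IsMonotoneFront F c a b u) {K : Set (ℝ × ℝ)}
    (hK : IsCompact K) :
    TendstoUniformlyOn (fun y (p : ℝ × ℝ) => u p.1 (y + p.2)) (fun _ => a) atBot K :=
  Antitone.tendstoUniformlyOn_of_forall_tendsto (ι := ℝᵒᵈ)
    (F := fun y (p : ℝ × ℝ) => u p.1 (y.ofDual + p.2)) hK
    (fun y => (hu.contDiff_translate y).continuous.continuousOn)
    (fun p _ _ _ h => hu.monotone p.1 (by gcongr; exact h)) continuousOn_const
    (fun p _ => (hu.tendsto_atBot p.1).comp (tendsto_atBot_add_const_right _ p.2 tendsto_id))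

theorem tendsto_gradient_zero (hF : ContDiff ℝ 1 F) (hu : IsMonotoneFront F c a b u)
    {l : Filter ℝ} {L x : ℝ}
    (hL : TendstoUniformlyOn (fun y (p : ℝ × ℝ) => u p.1 (y + p.2)) (fun _ => L) l
      (closedBall (x, 0) 1)) :
    Tendsto (pdx u x) l (𝓝 0) ∧ Tendsto (pdy u x) l (𝓝 0) := by
  obtain ⟨N, hN⟩ := hu.exists_abs_advection_le hF
  have hpdx (y : ℝ) : pdx (fun x t => u x (y + t)) x 0 = pdx u x y := by simp [pdx]
  have hpdy (y s t : ℝ) : pdy (fun x t => u x (y + t)) s t = pdy u s (y + t) :=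
    deriv_comp_const_add (u s) y t
  have hΔ (y s t : ℝ) :
      planeLaplacian (fun x t => u x (y + t)) s t = planeLaplacian u s (y + t) := by
    simpa using planeLaplacian_comp_const_add u 0 y s t
  have h := tendsto_gradient_zero_of_tendstoUniformlyOn (c := c) (N := N)
    (w := fun y x t => u x (y + t))
    hu.contDiff_translate (fun y p _ => by rw [hΔ, hpdy]; exact hN _ _) hL
  simpa only [hpdx, hpdy, add_zero] using h

theorem contDiff_horizontalFlux (hu : IsMonotoneFront F c a b u) :
    ContDiff ℝ 1 fun p : ℝ × ℝ => horizontalFlux u p.1 p.2 :=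
  (contDiff_pdx hu.contDiff one_add_one_eq_two.le).mul
    (contDiff_pdy hu.contDiff one_add_one_eq_two.le)

theorem contDiff_verticalFlux (hF : ContDiff ℝ 1 F) (hu : IsMonotoneFront F c a b u) :
    ContDiff ℝ 1 fun p : ℝ × ℝ => verticalFlux F u p.1 p.2 :=
  ((((contDiff_pdy hu.contDiff one_add_one_eq_two.le).pow 2).sub
    ((contDiff_pdx hu.contDiff one_add_one_eq_two.le).pow 2)).div_const 2).sub
    (hF.comp (hu.contDiff.of_le one_le_two))

theorem pdx_horizontalFlux_add_pdy_verticalFlux (hF : ContDiff ℝ 1 F)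
    (hu : IsMonotoneFront F c a b u) (x y : ℝ) :
    pdx (horizontalFlux u) x y + pdy (verticalFlux F u) x y = -c * pdy u x y ^ 2 := by
  have hux := (contDiff_pdx hu.contDiff one_add_one_eq_two.le).differentiable one_ne_zero
  have huy := (contDiff_pdy hu.contDiff one_add_one_eq_two.le).differentiable one_ne_zero
  have hFu : HasDerivAt (fun t => F (u x t)) (deriv F (u x y) * pdy u x y) y :=
    (hF.differentiable one_ne_zero _).hasDerivAt.comp y
      (hasDerivAt_pdy (hu.contDiff.differentiable two_ne_zero) x y)
  have hH : pdx (horizontalFlux u) x y = _ :=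
    ((hasDerivAt_pdxx hu.contDiff x y).mul (hasDerivAt_pdx huy x y)).deriv
  have hV : pdy (verticalFlux F u) x y = _ :=
    (((((hasDerivAt_pdyy hu.contDiff x y).pow 2).sub
      ((hasDerivAt_pdy hux x y).pow 2)).div_const 2).sub hFu).deriv
  rw [hH, hV, ← hu.pde, pdx_pdy_comm hu.contDiff, planeLaplacian]
  push_cast
  ring

theorem neg_mul_setIntegral_pdy_sq (hF : ContDiff ℝ 1 F) (hu : IsMonotoneFront F c a b u)
    {p q : ℝ × ℝ} (hpq : p ≤ q) :
    -c * ∫ z in Icc p q, pdy u z.1 z.2 ^ 2 =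
      ((∫ x in p.1..q.1, verticalFlux F u x q.2) - ∫ x in p.1..q.1, verticalFlux F u x p.2) +
        (∫ y in p.2..q.2, horizontalFlux u q.1 y) - ∫ y in p.2..q.2, horizontalFlux u p.1 y := by
  rw [← setIntegral_pdx_add_pdy hu.contDiff_horizontalFlux (hu.contDiff_verticalFlux hF) hpq,
    ← integral_const_mul]
  simp only [hu.pdx_horizontalFlux_add_pdy_verticalFlux hF]

theorem abs_integral_horizontalFlux_le (hu : IsMonotoneFront F c a b u) {A x : ℝ}
    (hA : ∀ y, |pdx u x y| ≤ A) {y₁ y₂ : ℝ} (hy : y₁ ≤ y₂) :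
    |∫ y in y₁..y₂, horizontalFlux u x y| ≤ A * (b - a) := by
  have hpdy : Continuous fun y => pdy u x y :=
    (contDiff_pdy hu.contDiff one_add_one_eq_two.le).continuous.comp
      (by fun_prop : Continuous fun y : ℝ => (x, y))
  have hint : IntervalIntegrable (fun y => A * pdy u x y) volume y₁ y₂ :=
    (continuous_const.mul hpdy).intervalIntegrable _ _
  have hA₀ : 0 ≤ A := (abs_nonneg _).trans (hA 0)
  calc |∫ y in y₁..y₂, horizontalFlux u x y| ≤ ∫ y in y₁..y₂, A * pdy u x y := by
        refine intervalIntegral.norm_integral_le_of_norm_le (E := ℝ) hy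
          (ae_of_all _ fun y _ => ?_) hint
        rw [horizontalFlux, norm_mul, norm_of_nonneg (hu.pdy_nonneg x y)]
        exact mul_le_mul_of_nonneg_right (hA y) (hu.pdy_nonneg x y)
    _ = A * (u x y₂ - u x y₁) := by
        rw [intervalIntegral.integral_const_mul, intervalIntegral.integral_eq_sub_of_hasDerivAt
          (fun y _ => hasDerivAt_pdy (hu.contDiff.differentiable two_ne_zero) x y)
          (hpdy.intervalIntegrable _ _)]
    _ ≤ A * (b - a) := by
        gcongr
        exacts [(hu.mem_Icc x y₂).2, (hu.mem_Icc x y₁).1]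

theorem exists_abs_verticalFlux_le (hF : ContDiff ℝ 1 F) (hu : IsMonotoneFront F c a b u) :
    ∃ B, ∀ x y, |verticalFlux F u x y| ≤ B := by
  obtain ⟨A, hA⟩ := hu.exists_abs_pdx_le_and_abs_pdy_le hF
  obtain ⟨B, hB⟩ := (isCompact_Icc (a := a) (b := b)).exists_bound_of_continuousOn
    hF.continuous.continuousOn
  refine ⟨A ^ 2 / 2 + B, fun x y => ?_⟩
  have hx := sq_le_sq' (abs_le.1 (hA x y).1).1 (abs_le.1 (hA x y).1).2
  have hy := sq_le_sq' (abs_le.1 (hA x y).2).1 (abs_le.1 (hA x y).2).2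
  have hFu := abs_le.1 (hB _ (hu.mem_Icc x y))
  rw [verticalFlux, abs_le]
  constructor <;> linarith [sq_nonneg (pdx u x y), sq_nonneg (pdy u x y)]

theorem tendsto_integral_verticalFlux (hF : ContDiff ℝ 1 F) (hu : IsMonotoneFront F c a b u)
    {l : Filter ℝ} [l.IsCountablyGenerated] {L : ℝ}
    (hL : ∀ x, TendstoUniformlyOn (fun y (p : ℝ × ℝ) => u p.1 (y + p.2)) (fun _ => L) l
      (closedBall (x, 0) 1)) (x₁ x₂ : ℝ) :
    Tendsto (fun y => ∫ x in x₁..x₂, verticalFlux F u x y) l (𝓝 (∫ _ in x₁..x₂, -F L)) := by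
  obtain ⟨B, hB⟩ := hu.exists_abs_verticalFlux_le hF
  have hmeas (y : ℝ) : Continuous fun x => verticalFlux F u x y :=
    (hu.contDiff_verticalFlux hF).continuous.comp (by fun_prop : Continuous fun x : ℝ => (x, y))
  have hlim (x : ℝ) : Tendsto (fun y => verticalFlux F u x y) l (𝓝 (-F L)) := by
    obtain ⟨hux, huy⟩ := hu.tendsto_gradient_zero hF (hL x)
    have hu_lim : Tendsto (u x) l (𝓝 L) := by
      simpa using (hL x).tendsto_at (mem_closedBall_self zero_le_one)
    simpa [verticalFlux] using
      (((huy.pow 2).sub (hux.pow 2)).div_const 2).sub ((hF.continuous.tendsto L).comp hu_lim)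
  exact intervalIntegral.tendsto_integral_filter_of_dominated_convergence (fun _ => B)
    (Eventually.of_forall fun y => (hmeas y).aestronglyMeasurable)
    (Eventually.of_forall fun y => ae_of_all _ fun x _ => hB x y) intervalIntegrable_const
    (ae_of_all _ fun x _ => hlim x)

theorem tendsto_verticalFlux_sub (hF : ContDiff ℝ 1 F) (hab : F a = F b)
    (hu : IsMonotoneFront F c a b u) (x₁ x₂ : ℝ) :
    Tendsto (fun S => (∫ x in x₁..x₂, verticalFlux F u x S) -
      ∫ x in x₁..x₂, verticalFlux F u x (-S)) atTop (𝓝 0) := by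
  have htop := hu.tendsto_integral_verticalFlux hF
    (fun x => hu.tendstoUniformlyOn_translate_atTop (isCompact_closedBall (x, 0) 1)) x₁ x₂
  have hbot := hu.tendsto_integral_verticalFlux hF
    (fun x => hu.tendstoUniformlyOn_translate_atBot (isCompact_closedBall (x, 0) 1)) x₁ x₂
  simpa [hab] using htop.sub (hbot.comp tendsto_neg_atTop_atBot)

theorem exists_setIntegral_closedBall_pdy_sq_le (hF : ContDiff ℝ 1 F) (hc : c ≠ 0)
    (hab : F a = F b) (hu : IsMonotoneFront F c a b u) :
    ∃ B, ∀ R, 0 ≤ R → ∫ p in closedBall (0 : ℝ × ℝ) R, pdy u p.1 p.2 ^ 2 ≤ B := by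
  obtain ⟨A, hA⟩ := hu.exists_abs_pdx_le_and_abs_pdy_le hF
  refine ⟨(2 * A * (b - a)) / |c|, fun R hR => (le_div_iff₀' (abs_pos.2 hc)).2 ?_⟩
  have hlim := (hu.tendsto_verticalFlux_sub hF hab (-R) R).abs.add_const (2 * A * (b - a))
  rw [abs_zero, zero_add] at hlim
  refine ge_of_tendsto hlim ((eventually_ge_atTop R).mono fun S hS => ?_)
  have hint : IntegrableOn (fun p : ℝ × ℝ => pdy u p.1 p.2 ^ 2) (Icc (-R, -S) (R, S)) :=
    ((contDiff_pdy hu.contDiff one_add_one_eq_two.le).continuous.pow 2).integrableOn_Icc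
  have hsub : closedBall (0 : ℝ × ℝ) R ⊆ Icc (-R, -S) (R, S) := by
    rw [← Prod.mk_zero_zero, ← closedBall_prod_same, ← Icc_prod_Icc, Real.closedBall_eq_Icc,
      zero_sub, zero_add]
    gcongr
  have hmono : ∫ p in closedBall (0 : ℝ × ℝ) R, pdy u p.1 p.2 ^ 2 ≤
      ∫ p in Icc (-R, -S) (R, S), pdy u p.1 p.2 ^ 2 :=
    setIntegral_mono_set hint (ae_of_all _ fun _ => sq_nonneg _) hsub.eventuallyLE
  have hside (x : ℝ) : |∫ y in -S..S, horizontalFlux u x y| ≤ A * (b - a) :=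
    hu.abs_integral_horizontalFlux_le (fun y => (hA x y).1) (by linarith)
  calc |c| * ∫ p in closedBall (0 : ℝ × ℝ) R, pdy u p.1 p.2 ^ 2
      ≤ |c| * ∫ p in Icc (-R, -S) (R, S), pdy u p.1 p.2 ^ 2 := by gcongr
    _ = |-c * ∫ p in Icc (-R, -S) (R, S), pdy u p.1 p.2 ^ 2| := by
      rw [abs_mul, abs_neg, abs_of_nonneg (integral_nonneg fun _ => sq_nonneg _)]
    _ ≤ _ := by
      rw [hu.neg_mul_setIntegral_pdy_sq hF (by constructor <;> simp <;> linarith)]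
      refine (abs_sub _ _).trans ((add_le_add (abs_add_le _ _) le_rfl).trans ?_)
      linarith [hside R, hside (-R)]

end IsMonotoneFront

theorem IsTravelingWave.isMonotoneFront {F : ℝ → ℝ} {c : ℝ} {u : ℝ → ℝ → ℝ}
    (hu : IsTravelingWave F c u) : IsMonotoneFront F c (-1) 1 u where
  contDiff := hu.1.1.of_le (by norm_num)
  pde := hu.1.2.1
  monotone x := (strictMono_of_deriv_pos (hu.1.2.2.2 x)).monotone
  tendsto_atBot := hu.2.2
  tendsto_atTop := hu.2.1

theorem uy_square_integrable_general {F : ℝ → ℝ} (hF : ContDiff ℝ 1 F) {c a b : ℝ} (hc : c ≠ 0)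
    (hab : F a = F b) {u : ℝ → ℝ → ℝ} (hu : IsMonotoneFront F c a b u) :
    Integrable fun p : ℝ × ℝ => pdy u p.1 p.2 ^ 2 := by
  have hcont : Continuous fun p : ℝ × ℝ => pdy u p.1 p.2 ^ 2 :=
    (contDiff_pdy hu.contDiff one_add_one_eq_two.le).continuous.pow 2
  obtain ⟨B, hB⟩ := hu.exists_setIntegral_closedBall_pdy_sq_le hF hc hab
  exact (aecover_closedBall tendsto_id).integrable_of_integral_bounded_of_nonneg_ae B
    (fun R => hcont.continuousOn.integrableOn_compact (isCompact_closedBall 0 R))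
    (ae_of_all _ fun _ => sq_nonneg _) ((eventually_ge_atTop 0).mono hB)

/-- `uᵧ` is square integrable over the plane (Lemma 2.1). -/
theorem uy_square_integrable
    (F : ℝ → ℝ) (hF : BalancedDoubleWell F) (c : ℝ) (hc : 0 < c)
    (u : ℝ → ℝ → ℝ) (hu : IsTravelingWave F c u) :
    Integrable (fun p : ℝ × ℝ => (pdy u p.1 p.2) ^ 2) := by
  obtain ⟨hF₃, -, -, -, -, -, -, hleft, hright⟩ := hF
  exact uy_square_integrable_general (hF₃.of_le (by norm_num)) hc.ne' (hleft.trans hright.symm)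
    hu.isMonotoneFront
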